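/- Let f be a continuous 2π-periodic piecewise C¹ function with ⟨f,f⟩ > 0 and ⟨f',f'⟩ > 0, and let ρ be its limit covariance function. Then ρ''(t) − ρ''(0) > 0 for every t > 0; in particular, for every 0 < δ ≤ T, inf_{δ ≤ t ≤ T} (ρ''(t) − ρ''(0)) > 0. -/

import Mathlib

open MeasureTheory Filter Set

noncomputable section

/-- Scalar product `⟨g,h⟩ := (1/2π)∫₀^{2π} g(t)h(t) dt`. -/
def iprod (g h : ℝ → ℝ) : ℝ :=
  (1 / (2 * Real.pi)) * ∫ t in (0:ℝ)..(2 * Real.pi), g t * h t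

/-- Convolution `(g∗h)(x) := (1/2π)∫₀^{2π} g(u)h(x−u) du`. -/
def conv (g h : ℝ → ℝ) (x : ℝ) : ℝ :=
  (1 / (2 * Real.pi)) * ∫ u in (0:ℝ)..(2 * Real.pi), g u * h (x - u)

/-- `f̌(x) := f(−x)`. -/
def checkFn (f : ℝ → ℝ) : ℝ → ℝ := fun x => f (-x)

/-- Limit covariance function: `ρ(u) := (1/u)∫₀^u (f∗f̌)(x) dx` for `u ≠ 0`,
`ρ(0) := ⟨f,f⟩`. -/
def rho (f : ℝ → ℝ) (u : ℝ) : ℝ :=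
  if u = 0 then iprod f f else (1 / u) * ∫ x in (0:ℝ)..u, conv f (checkFn f) x

/-- A continuous `2π`-periodic function which is piecewise `C¹` with a.e. derivative `f'`. -/
def IsPiecewiseC1 (f f' : ℝ → ℝ) : Prop :=
  Continuous f ∧ Function.Periodic f (2 * Real.pi) ∧
  ∃ S : Finset ℝ,
    (∀ x : ℝ, (∀ s ∈ S, ∀ k : ℤ, x ≠ s + 2 * Real.pi * k) → HasDerivAt f (f' x) x) ∧
    (∀ s ∈ S, (∃ L : ℝ, Tendsto f' (nhdsWithin s (Set.Iio s)) (nhds L)) ∧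
              (∃ R : ℝ, Tendsto f' (nhdsWithin s (Set.Ioi s)) (nhds R)))

/-!
The orbit `γ x = f (· + x)` of `f` under translation is a curve in `L²` of the circle. It is
stationary: `⟪γ x, γ y⟫` depends only on `y - x`, and so does the inner product of its velocities
`γ' x = f' (· + x)`. The covariance `κ x = ⟪γ 0, γ x⟫` is `f ∗ f̌` and satisfies
`κ'' x = -⟪γ' 0, γ' x⟫`. Since `ρ u = ∫₀¹ κ (s u) ds`, differentiating twice gives
`ρ'' t - ρ'' 0 = ∫₀¹ s² (⟪γ' 0, γ' 0⟫ - ⟪γ' 0, γ' (s t)⟫) ds`, which is nonnegative by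
Cauchy–Schwarz. If it vanished, `γ'` would be constant on `[0, t]`, so that `γ` would move there
along a straight line while staying on a sphere; then `γ' 0 = 0`, that is, `f' = 0` almost
everywhere.
-/

open scoped RealInnerProductSpace

lemma sInf_image_pos_of_isCompact {X : Type*} [TopologicalSpace X] {φ : X → ℝ} {K : Set X}
    (hK : IsCompact K) (hne : K.Nonempty) (hφ : ContinuousOn φ K) (hpos : ∀ x ∈ K, 0 < φ x) :
    0 < sInf (φ '' K) := by
  obtain ⟨x, hx, hmin⟩ := (hK.image_of_continuousOn hφ).sInf_mem (hne.image φ)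
  exact hmin ▸ hpos x hx

lemma absolutelyContinuousOnInterval_of_differentiableAt_off_countable {f : ℝ → ℝ} {s : Set ℝ}
    {a b : ℝ} (hf : ContinuousOn f (uIcc a b)) (hs : s.Countable)
    (hd : ∀ x ∉ s, DifferentiableAt ℝ f x) (hint : IntervalIntegrable (deriv f) volume a b) :
    AbsolutelyContinuousOnInterval f a b := by
  have hFTC (x : ℝ) (hx : x ∈ uIcc a b) : ∫ y in a..x, deriv f y = f x - f a :=
    integral_eq_of_hasDerivAt_off_countable f _ hs (hf.mono (uIcc_subset_uIcc_left hx))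
      (fun y hy => (hd y hy.2).hasDerivAt) (hint.mono_set (uIcc_subset_uIcc_left hx))
  refine (hint.absolutelyContinuousOnInterval_intervalIntegral left_mem_uIcc).congr' ?_
  filter_upwards [mem_inf_of_right (mem_principal_self _)] with I hI
  refine Finset.sum_congr rfl fun i hi => ?_
  rw [hFTC _ (hI.1 i hi).1, hFTC _ (hI.1 i hi).2, dist_sub_right]

lemma periodic_deriv {𝕜 F : Type*} [NontriviallyNormedField 𝕜] [NormedAddCommGroup F]
    [NormedSpace 𝕜 F] {f : 𝕜 → F} {c : 𝕜} (hf : Function.Periodic f c) :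
    Function.Periodic (deriv f) c := fun x => by
  rw [← deriv_comp_add_const, hf.funext]

section SegmentAverage

variable {E : Type*} [NormedAddCommGroup E] [NormedSpace ℝ E]

lemma hasDerivAt_integral_smul_comp_mul {w : ℝ → ℝ} {φ φ' : ℝ → E} (hw : Continuous w)
    (hφ : ∀ x, HasDerivAt φ (φ' x) x) (hφ' : Continuous φ') (a b x : ℝ) :
    HasDerivAt (fun x => ∫ s in a..b, w s • φ (s * x))
      (∫ s in a..b, (w s * s) • φ' (s * x)) x := by
  have hφc : Continuous φ := continuous_iff_continuousAt.2 fun x => (hφ x).continuousAt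
  have hF' : Continuous fun p : ℝ × ℝ => (w p.2 * p.2) • φ' (p.2 * p.1) := by fun_prop
  obtain ⟨C, hC⟩ := ((isCompact_closedBall x 1).prod isCompact_uIcc).exists_bound_of_continuousOn
    (hF'.continuousOn (s := Metric.closedBall x 1 ×ˢ uIcc a b))
  have hderiv (s y : ℝ) : HasDerivAt (fun y => w s • φ (s * y)) ((w s * s) • φ' (s * y)) y := by
    have hmul : HasDerivAt (fun y => s * y) s y := by simpa using (hasDerivAt_id y).const_mul s
    simpa only [mul_smul, Function.comp_def] using ((hφ (s * y)).scomp y hmul).fun_const_smul (w s)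
  refine (intervalIntegral.hasDerivAt_integral_of_dominated_loc_of_deriv_le (bound := fun _ => C)
    (Metric.closedBall_mem_nhds x one_pos)
    (.of_forall fun y => Continuous.aestronglyMeasurable (by fun_prop))
    (Continuous.intervalIntegrable (by fun_prop) a b)
    (Continuous.aestronglyMeasurable (by fun_prop)) ?_ intervalIntegrable_const
    (.of_forall fun s _ y _ => hderiv s y)).2
  exact .of_forall fun s hs y hy => hC (y, s) ⟨hy, uIoc_subset_uIcc hs⟩

/-- The average of `k` over the segment from `0` to `x`. Rescaling to `[0, 1]` gives it the value
`k 0` at `x = 0` and makes it as smooth as `k`. -/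
def segmentAverage (k : ℝ → E) (x : ℝ) : E := ∫ s in (0 : ℝ)..1, k (s * x)

lemma segmentAverage_zero [CompleteSpace E] (k : ℝ → E) : segmentAverage k 0 = k 0 := by
  simp [segmentAverage]

lemma segmentAverage_of_ne_zero (k : ℝ → E) {x : ℝ} (hx : x ≠ 0) :
    segmentAverage k x = (1 / x) • ∫ y in (0 : ℝ)..x, k y := by
  simp [segmentAverage, intervalIntegral.integral_comp_mul_right k hx]

lemma deriv_deriv_segmentAverage {k k' k'' : ℝ → E} (hk : ∀ x, HasDerivAt k (k' x) x)
    (hk' : ∀ x, HasDerivAt k' (k'' x) x) (hk'' : Continuous k'') :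
    deriv (deriv (segmentAverage k)) = fun x => ∫ s in (0 : ℝ)..1, s ^ 2 • k'' (s * x) := by
  have hk'_cont : Continuous k' := continuous_iff_continuousAt.2 fun x => (hk' x).continuousAt
  have hfirst : deriv (segmentAverage k) = fun x => ∫ s in (0 : ℝ)..1, s • k' (s * x) := by
    ext x
    simpa [funext_iff, ← segmentAverage.eq_1] using
      (hasDerivAt_integral_smul_comp_mul continuous_one hk hk'_cont 0 1 x).deriv
  ext x
  simpa [hfirst, sq] using (hasDerivAt_integral_smul_comp_mul continuous_id hk' hk'' 0 1 x).deriv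

lemma continuous_deriv_deriv_segmentAverage {k k' k'' : ℝ → E} (hk : ∀ x, HasDerivAt k (k' x) x)
    (hk' : ∀ x, HasDerivAt k' (k'' x) x) (hk'' : Continuous k'') :
    Continuous (deriv (deriv (segmentAverage k))) := by
  rw [deriv_deriv_segmentAverage hk hk' hk'']
  exact intervalIntegral.continuous_parametric_intervalIntegral_of_continuous' (by fun_prop) 0 1

lemma deriv_deriv_segmentAverage_zero_lt {k k' k'' : ℝ → ℝ} (hk : ∀ x, HasDerivAt k (k' x) x)
    (hk' : ∀ x, HasDerivAt k' (k'' x) x) (hk'' : Continuous k'') (hmin : ∀ x, k'' 0 ≤ k'' x)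
    {t s : ℝ} (hs : s ∈ Ioc 0 1) (hlt : k'' 0 < k'' (s * t)) :
    deriv (deriv (segmentAverage k)) 0 < deriv (deriv (segmentAverage k)) t := by
  simp only [deriv_deriv_segmentAverage hk hk' hk'', smul_eq_mul, mul_zero]
  refine intervalIntegral.integral_lt_integral_of_continuousOn_of_le_of_exists_lt zero_lt_one
    (Continuous.continuousOn (by fun_prop)) (Continuous.continuousOn (by fun_prop))
    (fun r _ => by gcongr; exact hmin _) ⟨s, Ioc_subset_Icc_self hs, ?_⟩
  have : 0 < s := hs.1
  gcongr

end SegmentAverage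

section StationaryCurve

variable {E : Type*} [NormedAddCommGroup E] [InnerProductSpace ℝ E] {γ γ' : ℝ → E}

/-- A curve in an inner product space is stationary if the inner product of two of its points
depends only on the time lag between them. -/
def IsStationaryCurve (γ : ℝ → E) : Prop :=
  ∀ h x y, ⟪γ (x + h), γ (y + h)⟫ = ⟪γ x, γ y⟫

lemma hasDerivAt_const_inner (v : E) {d : E} {x : ℝ} (hd : HasDerivAt γ d x) :
    HasDerivAt (fun x => ⟪v, γ x⟫) ⟪v, d⟫ x := by
  simpa using (hasDerivAt_const x v).inner ℝ hd

namespace IsStationaryCurve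

lemma norm_eq_norm_zero (hγ : IsStationaryCurve γ) (x : ℝ) : ‖γ x‖ = ‖γ 0‖ := by
  have h := hγ x 0 0
  rw [zero_add, real_inner_self_eq_norm_sq, real_inner_self_eq_norm_sq] at h
  exact (sq_eq_sq₀ (norm_nonneg _) (norm_nonneg _)).1 h

lemma inner_zero_neg (hγ : IsStationaryCurve γ) (x : ℝ) : ⟪γ 0, γ (-x)⟫ = ⟪γ 0, γ x⟫ := by
  simpa [real_inner_comm] using (hγ x 0 (-x)).symm

lemma inner_zero_le (hγ : IsStationaryCurve γ) (x : ℝ) : ⟪γ 0, γ x⟫ ≤ ⟪γ 0, γ 0⟫ := by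
  simpa [hγ.norm_eq_norm_zero x, sq] using real_inner_le_norm (γ 0) (γ x)

lemma eq_apply_zero_of_inner_le (hγ : IsStationaryCurve γ) {x : ℝ}
    (h : ⟪γ 0, γ 0⟫ ≤ ⟪γ 0, γ x⟫) : γ x = γ 0 := by
  have hdist := norm_sub_sq_real (γ 0) (γ x)
  rw [hγ.norm_eq_norm_zero x, ← real_inner_self_eq_norm_sq (γ 0)] at hdist
  have hnorm : ‖γ 0 - γ x‖ ^ 2 = 0 := le_antisymm (by linarith) (sq_nonneg _)
  exact (sub_eq_zero.1 (by simpa using hnorm)).symm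

lemma inner_deriv_right (hγ : IsStationaryCurve γ) (hd : ∀ x, HasDerivAt γ (γ' x) x)
    (h x y : ℝ) : ⟪γ (x + h), γ' (y + h)⟫ = ⟪γ x, γ' y⟫ := by
  have hleft := hasDerivAt_const_inner (γ (x + h)) ((hd (y + h)).comp_add_const y h)
  simp only [hγ h x] at hleft
  exact hleft.unique (hasDerivAt_const_inner (γ x) (hd y))

lemma of_hasDerivAt (hγ : IsStationaryCurve γ) (hd : ∀ x, HasDerivAt γ (γ' x) x) :
    IsStationaryCurve γ' := fun h x y => by
  have hleft := ((hd (x + h)).comp_add_const x h).inner ℝ (hasDerivAt_const x (γ' (y + h)))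
  have hright := (hd x).inner ℝ (hasDerivAt_const x (γ' y))
  simp only [hγ.inner_deriv_right hd h _ y] at hleft
  simpa using hleft.unique hright

lemma hasDerivAt_inner_zero_deriv (hγ : IsStationaryCurve γ) (hd : ∀ x, HasDerivAt γ (γ' x) x)
    (x : ℝ) : HasDerivAt (fun x => ⟪γ 0, γ' x⟫) (-⟪γ' 0, γ' x⟫) x := by
  have hshift (x : ℝ) : ⟪γ (-x), γ' 0⟫ = ⟪γ 0, γ' x⟫ := by
    simpa using (hγ.inner_deriv_right hd x (-x) 0).symm
  have hshift' : ⟪γ' (-x), γ' 0⟫ = ⟪γ' 0, γ' x⟫ := by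
    simpa using (hγ.of_hasDerivAt hd x (-x) 0).symm
  have := ((hd (-x)).scomp x (hasDerivAt_neg x)).inner ℝ (hasDerivAt_const x (γ' 0))
  simpa [Function.comp_def, hshift, hshift'] using this

lemma inner_apply_deriv_eq_zero (hγ : IsStationaryCurve γ) (hd : ∀ x, HasDerivAt γ (γ' x) x)
    (x : ℝ) : ⟪γ x, γ' x⟫ = 0 := by
  have h := (hd x).norm_sq
  simp only [hγ.norm_eq_norm_zero] at h
  simpa using h.unique (hasDerivAt_const x _)

lemma deriv_zero_eq_zero_of_eqOn (hγ : IsStationaryCurve γ) (hd : ∀ x, HasDerivAt γ (γ' x) x)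
    {t : ℝ} (ht : 0 < t) (hconst : ∀ x ∈ Ioo 0 t, γ' x = γ' 0) : γ' 0 = 0 := by
  let line (x : ℝ) : E := γ 0 + x • γ' 0
  have hline_deriv (x : ℝ) : HasDerivAt line (γ' 0) x := by
    have := ((hasDerivAt_id x).smul_const (γ' 0)).const_add (γ 0)
    rwa [one_smul] at this
  have hcont : Continuous γ := continuous_iff_continuousAt.2 fun x => (hd x).continuousAt
  have hderiv_eq (x : ℝ) (hx : x ∈ Ico 0 t) : γ' x = γ' 0 :=
    hx.1.eq_or_lt.elim (fun h => h ▸ rfl) fun h => hconst x ⟨h, hx.2⟩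
  have hline : γ t = γ 0 + t • γ' 0 :=
    eq_of_has_deriv_right_eq (fun x _ => (hd x).hasDerivWithinAt)
      (fun x hx => hderiv_eq x hx ▸ (hline_deriv x).hasDerivWithinAt)
      hcont.continuousOn (by fun_prop) (by simp [line]) t (right_mem_Icc.2 ht.le)
  -- The line is tangent at `γ 0` to the sphere centred at `0`, yet `γ` stays on that sphere.
  have hpythagoras : ‖γ t‖ * ‖γ t‖ = ‖γ 0‖ * ‖γ 0‖ + ‖t • γ' 0‖ * ‖t • γ' 0‖ := by
    rw [hline]
    exact norm_add_sq_eq_norm_sq_add_norm_sq_real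
      (by simp [inner_smul_right, hγ.inner_apply_deriv_eq_zero hd])
  simpa [hγ.norm_eq_norm_zero t, ht.ne'] using hpythagoras

lemma exists_inner_deriv_lt (hγ : IsStationaryCurve γ) (hd : ∀ x, HasDerivAt γ (γ' x) x)
    (hne : γ' 0 ≠ 0) {t : ℝ} (ht : 0 < t) :
    ∃ s ∈ Ioc (0 : ℝ) 1, ⟪γ' 0, γ' (s * t)⟫ < ⟪γ' 0, γ' 0⟫ := by
  by_contra! hge
  refine hne (hγ.deriv_zero_eq_zero_of_eqOn hd ht fun x hx => ?_)
  have := hge (x / t) ⟨div_pos hx.1 ht, (div_le_one ht).2 hx.2.le⟩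
  rw [div_mul_cancel₀ x ht.ne'] at this
  exact (hγ.of_hasDerivAt hd).eq_apply_zero_of_inner_le this

lemma continuous_deriv_deriv_segmentAverage_inner (hγ : IsStationaryCurve γ)
    (hd : ∀ x, HasDerivAt γ (γ' x) x) (hγ' : Continuous γ') :
    Continuous (deriv (deriv (segmentAverage fun x => ⟪γ 0, γ x⟫))) :=
  continuous_deriv_deriv_segmentAverage (fun x => hasDerivAt_const_inner _ (hd x))
    (hγ.hasDerivAt_inner_zero_deriv hd) (by fun_prop)

lemma deriv_deriv_segmentAverage_inner_zero_lt (hγ : IsStationaryCurve γ)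
    (hd : ∀ x, HasDerivAt γ (γ' x) x) (hγ' : Continuous γ') (hne : γ' 0 ≠ 0) {t : ℝ}
    (ht : 0 < t) :
    deriv (deriv (segmentAverage fun x => ⟪γ 0, γ x⟫)) 0 <
      deriv (deriv (segmentAverage fun x => ⟪γ 0, γ x⟫)) t := by
  obtain ⟨s, hs, hlt⟩ := hγ.exists_inner_deriv_lt hd hne ht
  exact deriv_deriv_segmentAverage_zero_lt (fun x => hasDerivAt_const_inner _ (hd x))
    (hγ.hasDerivAt_inner_zero_deriv hd) (by fun_prop)
    (fun x => neg_le_neg ((hγ.of_hasDerivAt hd).inner_zero_le x)) hs (neg_lt_neg hlt)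

end IsStationaryCurve
end StationaryCurve

section Translation

open AddCircle (haarAddCircle)

variable {T : ℝ} [Fact (0 < T)]

/-- The orbit of `F` in `L²` of the circle of length `T`, with its probability Haar measure, under
the translations `F ↦ F (· + x)`, `x : ℝ`. -/
def translationCurve (F : Lp ℝ 2 (haarAddCircle (T := T))) (x : ℝ) :
    Lp ℝ 2 (haarAddCircle (T := T)) :=
  DomAddAct.mk (x : AddCircle T) +ᵥ F

@[simp]
lemma translationCurve_zero (F : Lp ℝ 2 (haarAddCircle (T := T))) : translationCurve F 0 = F := by
  simp [translationCurve]

lemma continuous_translationCurve (F : Lp ℝ 2 (haarAddCircle (T := T))) :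
    Continuous (translationCurve F) := by
  have : Fact ((2 : ENNReal) ≠ ⊤) := ⟨ENNReal.ofNat_ne_top⟩
  exact (DomAddAct.continuous_mk.comp (AddCircle.continuous_mk' T)).vadd continuous_const

lemma isStationaryCurve_translationCurve (F : Lp ℝ 2 (haarAddCircle (T := T))) :
    IsStationaryCurve (translationCurve F) := fun h x y => by
  have hadd (z : ℝ) : translationCurve F (z + h) =
      Lp.compMeasurePreservingₗᵢ ℝ _ (measurePreserving_vadd (h : AddCircle T) haarAddCircle)
        (translationCurve F z) := by
    rw [translationCurve, AddCircle.coe_add, DomAddAct.mk_add, add_vadd]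
    rfl
  rw [hadd, hadd, LinearIsometry.inner_map_map]

lemma inner_toLp_translationCurve {f g : AddCircle T → ℝ} (hf : MemLp f 2 haarAddCircle)
    (hg : MemLp g 2 haarAddCircle) (x : ℝ) :
    ⟪hf.toLp, translationCurve hg.toLp x⟫ = ∫ c, f c * g (x + c) ∂haarAddCircle := by
  rw [L2.inner_def, translationCurve, DomAddAct.mk_vadd_toLp]
  refine integral_congr_ae ?_
  filter_upwards [hf.coeFn_toLp, (hg.comp_measurePreserving
    (measurePreserving_vadd (x : AddCircle T) _)).coeFn_toLp] with c hfc hgc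
  rw [real_inner_comm, hfc]
  exact congrArg (f c * ·) hgc

lemma integrable_mul_comp_add_prod {f g : AddCircle T → ℝ} (hf : MemLp f 2 haarAddCircle)
    (hg : MemLp g 2 haarAddCircle) (μ : Measure ℝ) [IsFiniteMeasure μ] :
    Integrable (fun p : ℝ × AddCircle T => f p.2 * g (p.1 + p.2)) (μ.prod haarAddCircle) := by
  have hshear : MeasurePreserving (fun p : ℝ × AddCircle T => (p.1, (p.1 : AddCircle T) + p.2))
      (μ.prod haarAddCircle) (μ.prod haarAddCircle) :=
    (MeasurePreserving.id μ).skew_product (g := fun y c => (y : AddCircle T) + c)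
      ((AddCircle.measurable_mk'.comp measurable_fst).add measurable_snd)
      (.of_forall fun y => (measurePreserving_add_left haarAddCircle (y : AddCircle T)).map_eq)
  exact (hf.comp_snd μ).integrable_mul ((hg.comp_snd μ).comp_measurePreserving hshear)

lemma integral_translationCurve {f g : AddCircle T → ℝ} (hf : MemLp f 2 haarAddCircle)
    (hg : MemLp g 2 haarAddCircle) (hfg : ∀ a b : ℝ, ∫ y in a..b, g y = f b - f a) (x : ℝ) :
    ∫ y in (0 : ℝ)..x, translationCurve hg.toLp y = translationCurve hf.toLp x - hf.toLp := by
  have hshift (c : AddCircle T) : ∫ y in (0 : ℝ)..x, g (y + c) = f (x + c) - f ((0 : ℝ) + c) := by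
    obtain ⟨u, rfl⟩ := QuotientAddGroup.mk_surjective c
    simp only [← AddCircle.coe_add]
    rw [intervalIntegral.integral_comp_add_right (fun y : ℝ => g y) u, hfg]
  have : IsFiniteMeasure (volume.restrict (uIoc 0 x)) := by rw [uIoc]; infer_instance
  refine ext_inner_left ℝ fun φ => ?_
  have hφ : MemLp φ 2 haarAddCircle := Lp.memLp φ
  have hφf (y : ℝ) : Integrable (fun c => φ c * f (y + c)) haarAddCircle :=
    hφ.integrable_mul (hf.comp_measurePreserving (measurePreserving_add_left _ (y : AddCircle T)))
  calc ⟪φ, ∫ y in (0 : ℝ)..x, translationCurve hg.toLp y⟫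
      = ∫ y in (0 : ℝ)..x, ⟪hφ.toLp, translationCurve hg.toLp y⟫ := by
        rw [Lp.toLp_coeFn]
        exact ((innerSL ℝ φ).intervalIntegral_comp_comm
          ((continuous_translationCurve _).intervalIntegrable 0 x)).symm
    _ = ∫ y in (0 : ℝ)..x, ∫ c, φ c * g (y + c) ∂haarAddCircle := by
        simp only [inner_toLp_translationCurve]
    _ = ∫ c, (∫ y in (0 : ℝ)..x, φ c * g (y + c)) ∂haarAddCircle :=
        intervalIntegral_integral_swap (integrable_mul_comp_add_prod hφ hg _)
    _ = ∫ c, (φ c * f (x + c) - φ c * f ((0 : ℝ) + c)) ∂haarAddCircle := by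
        simp only [intervalIntegral.integral_const_mul, hshift, mul_sub]
    _ = ⟪hφ.toLp, translationCurve hf.toLp x⟫ - ⟪hφ.toLp, translationCurve hf.toLp 0⟫ := by
        rw [integral_sub (hφf x) (hφf 0), inner_toLp_translationCurve,
          inner_toLp_translationCurve]
    _ = ⟪φ, translationCurve hf.toLp x - hf.toLp⟫ := by
        rw [Lp.toLp_coeFn, translationCurve_zero, inner_sub_right]

lemma hasDerivAt_translationCurve {f g : AddCircle T → ℝ} (hf : MemLp f 2 haarAddCircle)
    (hg : MemLp g 2 haarAddCircle) (hfg : ∀ a b : ℝ, ∫ y in a..b, g y = f b - f a) (x : ℝ) :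
    HasDerivAt (translationCurve hf.toLp) (translationCurve hg.toLp x) x := by
  have hprimitive : translationCurve hf.toLp =
      fun x => (∫ y in (0 : ℝ)..x, translationCurve hg.toLp y) + hf.toLp :=
    funext fun x => (sub_eq_iff_eq_add.1 (integral_translationCurve hf hg hfg x).symm)
  rw [hprimitive]
  exact ((continuous_translationCurve _).integral_hasStrictDerivAt 0 x).hasDerivAt.add_const _

lemma memLp_periodicLift {E : Type*} [NormedAddCommGroup E] {p : ENNReal} {g : ℝ → E} {t : ℝ}
    (hper : Function.Periodic g T) (hg : MemLp g p (volume.restrict (Ioc t (t + T)))) :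
    MemLp hper.lift p (haarAddCircle (T := T)) := by
  have hlift : hper.lift = g ∘ Subtype.val ∘ AddCircle.equivIoc T t :=
    funext fun c => congrArg hper.lift AddCircle.coe_equivIoc.symm
  have hvol : MemLp hper.lift p (volume : Measure (AddCircle T)) :=
    hlift ▸ hg.comp_measurePreserving
      ((measurePreserving_subtype_coe measurableSet_Ioc).comp
        (AddCircle.measurePreserving_equivIoc T))
  have hT : ENNReal.ofReal T ≠ 0 := by simpa using Fact.out (p := 0 < T)
  refine hvol.of_measure_le_smul (c := (ENNReal.ofReal T)⁻¹) (by simpa using hT) (le_of_eq ?_)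
  rw [AddCircle.volume_eq_smul_haarAddCircle, smul_smul,
    ENNReal.inv_mul_cancel hT ENNReal.ofReal_ne_top, one_smul]

lemma inner_toLp_translationCurve_periodicLift {f g : ℝ → ℝ} {hf : Function.Periodic f T}
    {hg : Function.Periodic g T} (hfL : MemLp hf.lift 2 (haarAddCircle (T := T)))
    (hgL : MemLp hg.lift 2 (haarAddCircle (T := T))) (x : ℝ) :
    ⟪hfL.toLp, translationCurve hgL.toLp x⟫ = T⁻¹ * ∫ u in (0 : ℝ)..T, f u * g (x + u) := by
  rw [inner_toLp_translationCurve, AddCircle.integral_haarAddCircle,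
    ← AddCircle.intervalIntegral_preimage T 0, zero_add, smul_eq_mul]
  rfl

end Translation

lemma memLp_two_of_iprod_self_pos {g : ℝ → ℝ}
    (hg : AEStronglyMeasurable g (volume.restrict (Ioc 0 (2 * Real.pi)))) (hpos : 0 < iprod g g) :
    MemLp g 2 (volume.restrict (Ioc 0 (2 * Real.pi))) := by
  have hint : IntervalIntegrable (fun x => g x * g x) volume 0 (2 * Real.pi) := by
    by_contra h
    -- The integral of a non-integrable function is `0` by convention.
    exact hpos.ne' (by simp [iprod, intervalIntegral.integral_undef h])
  rw [memLp_two_iff_integrable_sq hg]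
  simpa only [sq, IntegrableOn] using
    (intervalIntegrable_iff_integrableOn_Ioc_of_le Real.two_pi_pos.le).1 hint

namespace IsPiecewiseC1

variable {f f' : ℝ → ℝ}

lemma exists_countable_hasDerivAt (hf : IsPiecewiseC1 f f') :
    ∃ B : Set ℝ, B.Countable ∧ ∀ x ∉ B, HasDerivAt f (f' x) x := by
  obtain ⟨-, -, S, hS, -⟩ := hf
  refine ⟨⋃ s ∈ S, range fun k : ℤ => s + 2 * Real.pi * k,
    S.countable_toSet.biUnion fun s _ => countable_range _, fun x hx => hS x fun s hs k hk => ?_⟩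
  exact hx (mem_biUnion hs ⟨k, hk.symm⟩)

lemma iprod_deriv (hf : IsPiecewiseC1 f f') : iprod (deriv f) (deriv f) = iprod f' f' := by
  obtain ⟨B, hB, hd⟩ := hf.exists_countable_hasDerivAt
  have hae : ∀ᵐ x, deriv f x = f' x := (hB.ae_notMem volume).mono fun x hx => (hd x hx).deriv
  rw [iprod, iprod, intervalIntegral.integral_congr_ae]
  filter_upwards [hae] with x hx _
  rw [hx]

lemma absolutelyContinuousOnInterval (hf : IsPiecewiseC1 f f') (hpos : 0 < iprod f' f') (a b : ℝ) :
    AbsolutelyContinuousOnInterval f a b := by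
  obtain ⟨B, hB, hd⟩ := hf.exists_countable_hasDerivAt
  have hint : IntervalIntegrable (deriv f) volume 0 (2 * Real.pi) :=
    (intervalIntegrable_iff_integrableOn_Ioc_of_le Real.two_pi_pos.le).2
      ((memLp_two_of_iprod_self_pos (measurable_deriv f).aestronglyMeasurable
        (hf.iprod_deriv ▸ hpos)).integrable one_le_two)
  exact absolutelyContinuousOnInterval_of_differentiableAt_off_countable hf.1.continuousOn hB
    (fun x hx => (hd x hx).differentiableAt)
    ((periodic_deriv hf.2.1).intervalIntegrable₀ Real.two_pi_pos.ne' hint a b)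

end IsPiecewiseC1

section Covariance

open AddCircle (haarAddCircle)

local instance : Fact (0 < 2 * Real.pi) := ⟨Real.two_pi_pos⟩

lemma iprod_eq_inner {f g : ℝ → ℝ} {hf : Function.Periodic f (2 * Real.pi)}
    {hg : Function.Periodic g (2 * Real.pi)}
    (hfL : MemLp hf.lift 2 (haarAddCircle (T := 2 * Real.pi)))
    (hgL : MemLp hg.lift 2 (haarAddCircle (T := 2 * Real.pi))) :
    iprod f g = ⟪hfL.toLp, hgL.toLp⟫ := by
  have h := inner_toLp_translationCurve_periodicLift hfL hgL 0
  simp only [zero_add, translationCurve_zero] at h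
  rw [h, iprod, one_div]

lemma conv_checkFn_eq_inner {f g : ℝ → ℝ} {hf : Function.Periodic f (2 * Real.pi)}
    {hg : Function.Periodic g (2 * Real.pi)}
    (hfL : MemLp hf.lift 2 (haarAddCircle (T := 2 * Real.pi)))
    (hgL : MemLp hg.lift 2 (haarAddCircle (T := 2 * Real.pi))) (x : ℝ) :
    conv f (checkFn g) x = ⟪hfL.toLp, translationCurve hgL.toLp (-x)⟫ := by
  simp only [inner_toLp_translationCurve_periodicLift hfL hgL, conv, checkFn, one_div,
    neg_sub, neg_add_eq_sub]

lemma rho_eq_segmentAverage {f : ℝ → ℝ} {hf : Function.Periodic f (2 * Real.pi)}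
    (hfL : MemLp hf.lift 2 (haarAddCircle (T := 2 * Real.pi))) :
    rho f = segmentAverage fun x =>
      ⟪translationCurve hfL.toLp 0, translationCurve hfL.toLp x⟫ := by
  have hcov (x : ℝ) : conv f (checkFn f) x =
      ⟪translationCurve hfL.toLp 0, translationCurve hfL.toLp x⟫ := by
    rw [← (isStationaryCurve_translationCurve hfL.toLp).inner_zero_neg, translationCurve_zero,
      conv_checkFn_eq_inner hfL hfL]
  ext u
  obtain rfl | hu := eq_or_ne u 0
  · rw [rho, if_pos rfl, segmentAverage_zero, translationCurve_zero, iprod_eq_inner hfL hfL]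
  · rw [rho, if_neg hu, segmentAverage_of_ne_zero _ hu, smul_eq_mul]
    simp only [hcov]

lemma exists_hasDerivAt_translationCurve_of_iprod_deriv_pos {f : ℝ → ℝ}
    (hper : Function.Periodic f (2 * Real.pi)) (hac : ∀ a b, AbsolutelyContinuousOnInterval f a b)
    (hpos : 0 < iprod (deriv f) (deriv f)) :
    ∃ F F' : Lp ℝ 2 (haarAddCircle (T := 2 * Real.pi)), F' ≠ 0 ∧
      (∀ x, HasDerivAt (translationCurve F) (translationCurve F' x) x) ∧
      rho f = segmentAverage fun x => ⟪translationCurve F 0, translationCurve F x⟫ := by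
  have hcont : Continuous f := continuous_iff_continuousAt.2 fun x =>
    (hac (x - 1) (x + 1)).continuousOn.continuousAt
      (by rw [uIcc_of_le (by linarith)]; exact Icc_mem_nhds (by linarith) (by linarith))
  have hfL : MemLp hper.lift 2 (haarAddCircle (T := 2 * Real.pi)) :=
    memLp_periodicLift (t := 0) hper ((memLp_two_iff_integrable_sq
      hcont.aestronglyMeasurable).2 (hcont.pow 2).integrableOn_Ioc)
  have hf'L : MemLp (periodic_deriv hper).lift 2 (haarAddCircle (T := 2 * Real.pi)) :=
    memLp_periodicLift (t := 0) (periodic_deriv hper) (by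
      simpa using memLp_two_of_iprod_self_pos (measurable_deriv f).aestronglyMeasurable hpos)
  refine ⟨hfL.toLp, hf'L.toLp, fun hzero => ?_,
    hasDerivAt_translationCurve hfL hf'L fun a b => (hac a b).integral_deriv_eq_sub,
    rho_eq_segmentAverage hfL⟩
  rw [iprod_eq_inner hf'L hf'L, hzero, inner_zero_left] at hpos
  exact hpos.false

theorem statement7_general {f : ℝ → ℝ} (hper : Function.Periodic f (2 * Real.pi))
    (hac : ∀ a b, AbsolutelyContinuousOnInterval f a b) (hpos : 0 < iprod (deriv f) (deriv f)) :
    (∀ t : ℝ, 0 < t → 0 < deriv (deriv (rho f)) t - deriv (deriv (rho f)) 0) ∧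
    (∀ δ T : ℝ, 0 < δ → δ ≤ T →
      0 < sInf ((fun t => deriv (deriv (rho f)) t - deriv (deriv (rho f)) 0) '' Icc δ T)) := by
  obtain ⟨F, F', hne, hd, hrho⟩ :=
    exists_hasDerivAt_translationCurve_of_iprod_deriv_pos hper hac hpos
  have hF := isStationaryCurve_translationCurve F
  have hF' := continuous_translationCurve F'
  have hgap (t : ℝ) (ht : 0 < t) : 0 < deriv (deriv (rho f)) t - deriv (deriv (rho f)) 0 := by
    rw [hrho, sub_pos]
    exact hF.deriv_deriv_segmentAverage_inner_zero_lt hd hF' (by simpa using hne) ht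
  have hcont : Continuous (deriv (deriv (rho f))) :=
    hrho ▸ hF.continuous_deriv_deriv_segmentAverage_inner hd hF'
  exact ⟨hgap, fun δ T hδ hδT => sInf_image_pos_of_isCompact isCompact_Icc (nonempty_Icc.2 hδT)
    (hcont.sub continuous_const).continuousOn fun t ht => hgap t (hδ.trans_le ht.1)⟩

end Covariance

theorem statement7 (f f' : ℝ → ℝ) (hf : IsPiecewiseC1 f f')
    (hff : 0 < iprod f f) (hff' : 0 < iprod f' f') :
    (∀ t : ℝ, 0 < t →
      0 < deriv (deriv (rho f)) t - deriv (deriv (rho f)) 0) ∧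
    (∀ δ T : ℝ, 0 < δ → δ ≤ T →
      0 < sInf ((fun t => deriv (deriv (rho f)) t - deriv (deriv (rho f)) 0) ''
        Set.Icc δ T)) :=
  statement7_general hf.2.1 (hf.absolutelyContinuousOnInterval hff') (hf.iprod_deriv ▸ hff')

end
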